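/- arXiv:2110.06670 — 2 statements merged into one kernel-verified Lean document; each statement's English description precedes it below -/
import Mathlib

section
/- Let v₀ : ℝ³ → ℝ be a smooth function. The following are equivalent: (i) X²v₀ = Y²v₀ and XYv₀ = −YXv₀ on ℝ³; (ii) Z²v₀ = 0 on ℝ³; (iii) there exist real constants c₁,…,c₈ such that v₀(x,y,t) = c₁(x⁴ + 2x²y² + y⁴ + t²) + c₂(ty − xy² − x³) + c₃(tx + x²y + y³) + c₄(x² + y²) + c₅x + c₆y + c₇t + c₈. -/
noncomputable section

open Complex

/-- The underlying space of the first Heisenberg group: ℝ³ with coordinates (x, y, t). -/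
abbrev Heis : Type := ℝ × ℝ × ℝ

/-- The left-invariant vector field X = ∂/∂x + 2y ∂/∂t, as a derivation. -/
def XD {E : Type*} [NormedAddCommGroup E] [NormedSpace ℝ E] (u : Heis → E) (p : Heis) : E :=
  fderiv ℝ u p (1, 0, 2 * p.2.1)

/-- The left-invariant vector field Y = ∂/∂y − 2x ∂/∂t, as a derivation. -/
def YD {E : Type*} [NormedAddCommGroup E] [NormedSpace ℝ E] (u : Heis → E) (p : Heis) : E :=
  fderiv ℝ u p (0, 1, -(2 * p.1))

/-- The vector field T = ∂/∂t, as a derivation. -/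
def TD {E : Type*} [NormedAddCommGroup E] [NormedSpace ℝ E] (u : Heis → E) (p : Heis) : E :=
  fderiv ℝ u p (0, 0, 1)

/-- Z = (X − iY)/2. -/
def ZD (u : Heis → ℂ) (p : Heis) : ℂ := (XD u p - Complex.I * YD u p) / 2

/-- Z̄ = (X + iY)/2. -/
def ZbD (u : Heis → ℂ) (p : Heis) : ℂ := (XD u p + Complex.I * YD u p) / 2

/-- The complexification F = f₁ + i f₂ of the horizontal components. -/
def CF (f1 f2 : Heis → ℝ) : Heis → ℂ := fun p => (f1 p : ℂ) + (f2 p : ℂ) * Complex.I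

/-- Complexification of a real-valued function. -/
def Cplx (u : Heis → ℝ) : Heis → ℂ := fun p => (u p : ℂ)

/-- The horizontal Jacobian J_F = Xf₁·Yf₂ − Yf₁·Xf₂. -/
def JF (f1 f2 : Heis → ℝ) (p : Heis) : ℝ := XD f1 p * YD f2 p - YD f1 p * XD f2 p

/-- The contact equations on Ω. -/
def ContactOn (f1 f2 f3 : Heis → ℝ) (Ω : Set Heis) : Prop :=
  ∀ p ∈ Ω, XD f3 p - 2 * f2 p * XD f1 p + 2 * f1 p * XD f2 p = 0 ∧
           YD f3 p - 2 * f2 p * YD f1 p + 2 * f1 p * YD f2 p = 0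

/-- f = (f₁,f₂,f₃) is conformal on Ω: smooth, contact, J_F > 0, and the conformality
equations hold. -/
def ConformalOn (f1 f2 f3 : Heis → ℝ) (Ω : Set Heis) : Prop :=
  ContDiffOn ℝ (⊤ : ℕ∞) f1 Ω ∧ ContDiffOn ℝ (⊤ : ℕ∞) f2 Ω ∧ ContDiffOn ℝ (⊤ : ℕ∞) f3 Ω ∧
  ContactOn f1 f2 f3 Ω ∧ (∀ p ∈ Ω, 0 < JF f1 f2 p) ∧
  ∀ p ∈ Ω, (XD f1 p) ^ 2 + (XD f2 p) ^ 2 = (YD f1 p) ^ 2 + (YD f2 p) ^ 2 ∧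
           XD f1 p * YD f1 p + XD f2 p * YD f2 p = 0

/-- The sub-Laplacian Δ_H = X² + Y². -/
def LapH {E : Type*} [NormedAddCommGroup E] [NormedSpace ℝ E] (u : Heis → E) (p : Heis) : E :=
  XD (XD u) p + YD (YD u) p

/-- The CR Schwarzian derivative S_CR(f) = (1/2)·J_F·Z²(J_F⁻¹). -/
def SCR (f1 f2 : Heis → ℝ) (p : Heis) : ℂ :=
  (1 / 2 : ℂ) * (JF f1 f2 p : ℂ) * ZD (ZD (fun q => (((JF f1 f2 q)⁻¹ : ℝ) : ℂ))) p

/-- The classical type Schwarzian S_CL(f) = Z³F/ZF − (3/2)(Z²F/ZF)². -/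
def SCL (f1 f2 : Heis → ℝ) (p : Heis) : ℂ :=
  ZD (ZD (ZD (CF f1 f2))) p / ZD (CF f1 f2) p
    - (3 / 2 : ℂ) * (ZD (ZD (CF f1 f2)) p / ZD (CF f1 f2) p) ^ 2

/-- The Preschwarzian Pf = Z(ln J_F). -/
def PS (f1 f2 : Heis → ℝ) (p : Heis) : ℂ := ZD (Cplx (fun q => Real.log (JF f1 f2 q))) p

/-- The map (f₁,f₂,f₃) packaged as a map Heis → Heis. -/
def Fmap (f1 f2 f3 : Heis → ℝ) (p : Heis) : Heis := (f1 p, f2 p, f3 p)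

theorem contDiff_fderiv_apply {u : Heis → ℝ} (hu : ContDiff ℝ (⊤ : ℕ∞) u) {V : Heis → Heis}
    (hV : ContDiff ℝ (⊤ : ℕ∞) V) : ContDiff ℝ (⊤ : ℕ∞) fun p => fderiv ℝ u p (V p) :=
  (hu.fderiv_right (m := (⊤ : ℕ∞)) (by simp)).clm_apply hV

theorem contDiff_XD {u : Heis → ℝ} (hu : ContDiff ℝ (⊤ : ℕ∞) u) :
    ContDiff ℝ (⊤ : ℕ∞) (XD u) :=
  contDiff_fderiv_apply hu (V := fun p => (1, 0, 2 * p.2.1)) (by fun_prop)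

theorem contDiff_YD {u : Heis → ℝ} (hu : ContDiff ℝ (⊤ : ℕ∞) u) :
    ContDiff ℝ (⊤ : ℕ∞) (YD u) :=
  contDiff_fderiv_apply hu (V := fun p => (0, 1, -(2 * p.1))) (by fun_prop)

theorem contDiff_TD {u : Heis → ℝ} (hu : ContDiff ℝ (⊤ : ℕ∞) u) :
    ContDiff ℝ (⊤ : ℕ∞) (TD u) :=
  contDiff_fderiv_apply hu (V := fun _ => (0, 0, 1)) (by fun_prop)

theorem differentiable_of_smooth {u : Heis → ℝ} (hu : ContDiff ℝ (⊤ : ℕ∞) u) :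
    Differentiable ℝ u :=
  hu.differentiable (by simp)

theorem fderiv_fderiv_apply {u : Heis → ℝ} (hu : ContDiff ℝ (⊤ : ℕ∞) u) {V : Heis → Heis}
    {p : Heis} {V' : Heis →L[ℝ] Heis} (hV : HasFDerivAt V V' p) (w : Heis) :
    fderiv ℝ (fun q => fderiv ℝ u q (V q)) p w
      = fderiv ℝ (fderiv ℝ u) p w (V p) + fderiv ℝ u p (V' w) := by
  have h : DifferentiableAt ℝ (fderiv ℝ u) p :=
    (hu.fderiv_right (m := (⊤ : ℕ∞)) (by simp)).differentiable (by simp) p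
  rw [(h.hasFDerivAt.clm_apply hV).fderiv]
  simp [add_comm]

theorem fderiv_fderiv_symm {u : Heis → ℝ} (hu : ContDiff ℝ (⊤ : ℕ∞) u) (p v w : Heis) :
    fderiv ℝ (fderiv ℝ u) p v w = fderiv ℝ (fderiv ℝ u) p w v :=
  (hu.contDiffAt.isSymmSndFDerivAt (by simpa using WithTop.coe_le_coe.2 (le_top (a := (2 : ℕ∞))))) v w

theorem hasFDerivAt_X_direction (p : Heis) :
    HasFDerivAt (fun q : Heis => ((1, 0, 2 * q.2.1) : Heis))
      ((0 : Heis →L[ℝ] ℝ).prod ((0 : Heis →L[ℝ] ℝ).prod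
        ((2 : ℝ) • (ContinuousLinearMap.fst ℝ ℝ ℝ).comp (ContinuousLinearMap.snd ℝ ℝ (ℝ × ℝ))))) p :=
  (hasFDerivAt_const _ _).prodMk ((hasFDerivAt_const _ _).prodMk
    ((hasFDerivAt_snd.fst).const_mul 2))

theorem hasFDerivAt_Y_direction (p : Heis) :
    HasFDerivAt (fun q : Heis => ((0, 1, -(2 * q.1)) : Heis))
      ((0 : Heis →L[ℝ] ℝ).prod ((0 : Heis →L[ℝ] ℝ).prod
        (-((2 : ℝ) • ContinuousLinearMap.fst ℝ ℝ (ℝ × ℝ))))) p :=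
  (hasFDerivAt_const _ _).prodMk ((hasFDerivAt_const _ _).prodMk
    (hasFDerivAt_fst.const_mul 2).neg)

theorem fderiv_vertical (u : Heis → ℝ) (p : Heis) (s : ℝ) :
    fderiv ℝ u p (0, 0, s) = s * TD u p := by
  have : ((0, 0, s) : Heis) = s • (0, 0, 1) := by simp
  rw [this, map_smul, smul_eq_mul, TD]

theorem XD_YD {u : Heis → ℝ} (hu : ContDiff ℝ (⊤ : ℕ∞) u) (p : Heis) :
    XD (YD u) p = YD (XD u) p - 4 * TD u p := by
  have h1 := fderiv_fderiv_apply hu (hasFDerivAt_Y_direction p) (1, 0, 2 * p.2.1)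
  have h2 := fderiv_fderiv_apply hu (hasFDerivAt_X_direction p) (0, 1, -(2 * p.1))
  change XD (YD u) p = _ at h1
  change YD (XD u) p = _ at h2
  rw [h1, h2, fderiv_fderiv_symm hu]
  simp [fderiv_vertical]
  ring

theorem XD_TD {u : Heis → ℝ} (hu : ContDiff ℝ (⊤ : ℕ∞) u) : XD (TD u) = TD (XD u) := by
  funext p
  have h1 := fderiv_fderiv_apply hu (hasFDerivAt_const ((0, 0, 1) : Heis) p) (1, 0, 2 * p.2.1)
  have h2 := fderiv_fderiv_apply hu (hasFDerivAt_X_direction p) (0, 0, 1)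
  change XD (TD u) p = _ at h1
  change TD (XD u) p = _ at h2
  rw [h1, h2, fderiv_fderiv_symm hu]
  simp [fderiv_vertical]

theorem YD_TD {u : Heis → ℝ} (hu : ContDiff ℝ (⊤ : ℕ∞) u) : YD (TD u) = TD (YD u) := by
  funext p
  have h1 := fderiv_fderiv_apply hu (hasFDerivAt_const ((0, 0, 1) : Heis) p) (0, 1, -(2 * p.1))
  have h2 := fderiv_fderiv_apply hu (hasFDerivAt_Y_direction p) (0, 0, 1)
  change YD (TD u) p = _ at h1
  change TD (YD u) p = _ at h2
  rw [h1, h2, fderiv_fderiv_symm hu]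
  simp [fderiv_vertical]

theorem XD_const_mul {u : Heis → ℝ} (hu : ContDiff ℝ (⊤ : ℕ∞) u) (c : ℝ) (p : Heis) :
    XD (fun q => c * u q) p = c * XD u p := by
  simp [XD, fderiv_const_mul (differentiable_of_smooth hu p)]

theorem YD_const_mul {u : Heis → ℝ} (hu : ContDiff ℝ (⊤ : ℕ∞) u) (c : ℝ) (p : Heis) :
    YD (fun q => c * u q) p = c * YD u p := by
  simp [YD, fderiv_const_mul (differentiable_of_smooth hu p)]

theorem TD_const_mul {u : Heis → ℝ} (hu : ContDiff ℝ (⊤ : ℕ∞) u) (c : ℝ) (p : Heis) :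
    TD (fun q => c * u q) p = c * TD u p := by
  simp [TD, fderiv_const_mul (differentiable_of_smooth hu p)]

theorem XD_const (c : ℝ) (p : Heis) : XD (fun _ => c) p = 0 := by simp [XD]

theorem YD_const (c : ℝ) (p : Heis) : YD (fun _ => c) p = 0 := by simp [YD]

/-- A smooth function annihilated by the horizontal fields is constant. -/
theorem eq_const_of_XD_YD_eq_zero {u : Heis → ℝ} (hu : ContDiff ℝ (⊤ : ℕ∞) u)
    (hX : ∀ p, XD u p = 0) (hY : ∀ p, YD u p = 0) : ∃ c, ∀ p, u p = c := by
  have hT : ∀ p, TD u p = 0 := fun p => by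
    have h := XD_YD hu p
    rw [show YD u = fun _ => 0 from funext hY, show XD u = fun _ => 0 from funext hX,
      XD_const, YD_const] at h
    linarith
  refine ⟨u 0, fun p => is_const_of_fderiv_eq_zero (𝕜 := ℝ) (differentiable_of_smooth hu)
    (fun q => ContinuousLinearMap.ext fun w => ?_) p 0⟩
  have hw : w = w.1 • ((1, 0, 2 * q.2.1) : Heis) + w.2.1 • ((0, 1, -(2 * q.1)) : Heis)
      + (w.2.2 - 2 * q.2.1 * w.1 + 2 * q.1 * w.2.1) • ((0, 0, 1) : Heis) := by
    ext <;> simp; ring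
  have hX := hX q
  have hY := hY q
  have hT := hT q
  rw [XD] at hX
  rw [YD] at hY
  rw [TD] at hT
  rw [hw, map_add, map_add, map_smul, map_smul, map_smul, hX, hY, hT]
  simp

theorem eq_add_const_of_XD_YD_eq {u g : Heis → ℝ} (hu : ContDiff ℝ (⊤ : ℕ∞) u)
    (hg : ContDiff ℝ (⊤ : ℕ∞) g) (hX : ∀ p, XD u p = XD g p) (hY : ∀ p, YD u p = YD g p) :
    ∃ c, ∀ p, u p = g p + c := by
  obtain ⟨c, hc⟩ := eq_const_of_XD_YD_eq_zero (u := fun p => u p - g p) (hu.sub hg)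
    (fun p => by
      have := hX p
      simp only [XD] at this ⊢
      rw [fderiv_fun_sub (differentiable_of_smooth hu p) (differentiable_of_smooth hg p)]
      simp [this])
    (fun p => by
      have := hY p
      simp only [YD] at this ⊢
      rw [fderiv_fun_sub (differentiable_of_smooth hu p) (differentiable_of_smooth hg p)]
      simp [this])
  exact ⟨c, fun p => by linarith [hc p]⟩

theorem fderiv_coord_x (p w : Heis) : fderiv ℝ (fun q : Heis => q.1) p w = w.1 := by
  rw [fderiv_fst]; rfl

theorem fderiv_coord_y (p w : Heis) : fderiv ℝ (fun q : Heis => q.2.1) p w = w.2.1 := by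
  rw [(hasFDerivAt_snd.fst).fderiv]; rfl

theorem fderiv_coord_t (p w : Heis) : fderiv ℝ (fun q : Heis => q.2.2) p w = w.2.2 := by
  rw [(hasFDerivAt_snd.snd).fderiv]; rfl

theorem exists_polynomial_of_system {v : Heis → ℝ} (hv : ContDiff ℝ (⊤ : ℕ∞) v)
    (hXX : ∀ p, XD (XD v) p = YD (YD v) p) (hXY : ∀ p, XD (YD v) p = -(YD (XD v) p)) :
    ∃ c1 c2 c3 c4 c5 c6 c7 c8 : ℝ, ∀ p : Heis, v p =
      c1 * (p.1 ^ 4 + 2 * p.1 ^ 2 * p.2.1 ^ 2 + p.2.1 ^ 4 + p.2.2 ^ 2)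
        + c2 * (p.2.2 * p.2.1 - p.1 * p.2.1 ^ 2 - p.1 ^ 3)
        + c3 * (p.2.2 * p.1 + p.1 ^ 2 * p.2.1 + p.2.1 ^ 3)
        + c4 * (p.1 ^ 2 + p.2.1 ^ 2) + c5 * p.1 + c6 * p.2.1 + c7 * p.2.2 + c8 := by
  obtain ⟨A, hA⟩ : ∃ A, A = XD v := ⟨_, rfl⟩
  obtain ⟨B, hB⟩ : ∃ B, B = YD v := ⟨_, rfl⟩
  obtain ⟨C, hC⟩ : ∃ C, C = TD v := ⟨_, rfl⟩
  obtain ⟨D, hD⟩ : ∃ D, D = XD A := ⟨_, rfl⟩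
  have sA : ContDiff ℝ (⊤ : ℕ∞) A := hA ▸ contDiff_XD hv
  have sB : ContDiff ℝ (⊤ : ℕ∞) B := hB ▸ contDiff_YD hv
  have sC : ContDiff ℝ (⊤ : ℕ∞) C := hC ▸ contDiff_TD hv
  have sD : ContDiff ℝ (⊤ : ℕ∞) D := hD ▸ contDiff_XD sA
  have sTA := contDiff_TD sA
  have sTB := contDiff_TD sB
  have sTC := contDiff_TD sC
  have comm := XD_YD hv
  rw [← hA, ← hB] at hXX hXY
  rw [← hA, ← hB, ← hC] at comm
  have YB : YD B = D := by rw [hD]; exact (funext hXX).symm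
  have XB : XD B = fun p => -2 * C p := funext fun p => by linarith [hXY p, comm p]
  have YA : YD A = fun p => 2 * C p := funext fun p => by linarith [hXY p, comm p]
  have XC : XD C = TD A := by rw [hC, hA, XD_TD hv]
  have YC : YD C = TD B := by rw [hC, hB, YD_TD hv]
  have XDD : XD D = fun p => -6 * TD B p := funext fun p => by
    have h := XD_YD sB p
    rw [YB, XB, YD_const_mul sC, YC] at h
    linarith
  have YDD : YD D = fun p => 6 * TD A p := funext fun p => by
    have h := XD_YD sA p
    rw [← hD, YA, XD_const_mul sC, XC] at h
    linarith
  have TDD : TD D = fun _ => 0 := funext fun p => by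
    have h := XD_YD sD p
    rw [XDD, YDD, XD_const_mul sTA, YD_const_mul sTB, XD_TD sA, YD_TD sB, YB, ← hD] at h
    linarith
  have XTA : XD (TD A) = fun _ => 0 := by rw [XD_TD sA, ← hD, TDD]
  have YTB : YD (TD B) = fun _ => 0 := by rw [YD_TD sB, YB, TDD]
  have YTA : YD (TD A) = fun p => 2 * TD C p := funext fun p => by
    rw [YD_TD sA, YA, TD_const_mul sC]
  have XTB : XD (TD B) = fun p => -2 * TD C p := funext fun p => by
    rw [XD_TD sB, XB, TD_const_mul sC]
  have XTC : ∀ p, XD (TD C) p = 0 := fun p => by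
    have h := XD_YD sTA p
    rw [YTA, XTA, XD_const_mul sTC, YD_const, ← XC, ← XD_TD sC] at h
    linarith
  have YTC : ∀ p, YD (TD C) p = 0 := fun p => by
    have h := XD_YD sTB p
    rw [YTB, XTB, YD_const_mul sTC, XD_const, ← YC, ← YD_TD sC] at h
    linarith
  obtain ⟨k, hk⟩ := eq_const_of_XD_YD_eq_zero sTC XTC YTC
  obtain ⟨c3, h3⟩ := eq_add_const_of_XD_YD_eq sTA
    (g := fun p => 2 * k * p.2.1) (by fun_prop)
    (fun p => by
      rw [XTA]
      simp (disch := fun_prop) [XD, fderiv_const_mul, fderiv_coord_y])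
    (fun p => by
      rw [YTA]
      simp (disch := fun_prop) [YD, fderiv_const_mul, fderiv_coord_y, hk])
  obtain ⟨c2, h2⟩ := eq_add_const_of_XD_YD_eq sTB
    (g := fun p => -2 * k * p.1) (by fun_prop)
    (fun p => by
      rw [XTB]
      simp (disch := fun_prop) [XD, fderiv_const_mul, fderiv_coord_x, hk])
    (fun p => by
      rw [YTB]
      simp (disch := fun_prop) [YD, fderiv_const_mul, fderiv_coord_x])
  obtain ⟨c7, h7⟩ := eq_add_const_of_XD_YD_eq sC
    (g := fun p => k * p.2.2 + c2 * p.2.1 + c3 * p.1) (by fun_prop)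
    (fun p => by
      rw [XC, h3]
      simp (disch := fun_prop) [XD, fderiv_fun_add, fderiv_const_mul, fderiv_coord_x,
        fderiv_coord_y, fderiv_coord_t]
      ring)
    (fun p => by
      rw [YC, h2]
      simp (disch := fun_prop) [YD, fderiv_fun_add, fderiv_const_mul, fderiv_coord_x,
        fderiv_coord_y, fderiv_coord_t]
      ring)
  obtain ⟨d, hd⟩ := eq_add_const_of_XD_YD_eq sD
    (g := fun p => 6 * k * (p.1 ^ 2 + p.2.1 ^ 2) - 6 * c2 * p.1 + 6 * c3 * p.2.1) (by fun_prop)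
    (fun p => by
      simp only [XDD, h2]
      simp (disch := fun_prop) [XD, fderiv_fun_add, fderiv_fun_sub, fderiv_const_mul,
        fderiv_fun_pow, fderiv_coord_x, fderiv_coord_y]
      ring)
    (fun p => by
      simp only [YDD, h3]
      simp (disch := fun_prop) [YD, fderiv_fun_add, fderiv_fun_sub, fderiv_const_mul,
        fderiv_fun_pow, fderiv_coord_x, fderiv_coord_y]
      ring)
  obtain ⟨c5, h5⟩ := eq_add_const_of_XD_YD_eq sA
    (g := fun p => 2 * k * (p.1 * (p.1 ^ 2 + p.2.1 ^ 2) + p.2.1 * p.2.2)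
      + c2 * (p.2.1 ^ 2 - 3 * p.1 ^ 2) + c3 * (p.2.2 + 4 * (p.1 * p.2.1)) + d * p.1
      + 2 * c7 * p.2.1) (by fun_prop)
    (fun p => by
      rw [← hD, hd]
      simp (disch := fun_prop) [XD, fderiv_fun_add, fderiv_fun_sub, fderiv_const_mul,
        fderiv_fun_mul, fderiv_fun_pow, fderiv_coord_x, fderiv_coord_y, fderiv_coord_t]
      ring)
    (fun p => by
      simp only [YA, h7]
      simp (disch := fun_prop) [YD, fderiv_fun_add, fderiv_fun_sub, fderiv_const_mul,
        fderiv_fun_mul, fderiv_fun_pow, fderiv_coord_x, fderiv_coord_y, fderiv_coord_t]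
      ring)
  obtain ⟨c6, h6⟩ := eq_add_const_of_XD_YD_eq sB
    (g := fun p => 2 * k * (p.2.1 * (p.1 ^ 2 + p.2.1 ^ 2) - p.1 * p.2.2)
      + c2 * (p.2.2 - 4 * (p.1 * p.2.1)) + c3 * (3 * p.2.1 ^ 2 - p.1 ^ 2) + d * p.2.1
      - 2 * c7 * p.1) (by fun_prop)
    (fun p => by
      simp only [XB, h7]
      simp (disch := fun_prop) [XD, fderiv_fun_add, fderiv_fun_sub, fderiv_const_mul,
        fderiv_fun_mul, fderiv_fun_pow, fderiv_coord_x, fderiv_coord_y, fderiv_coord_t]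
      ring)
    (fun p => by
      rw [YB, hd]
      simp (disch := fun_prop) [YD, fderiv_fun_add, fderiv_fun_sub, fderiv_const_mul,
        fderiv_fun_mul, fderiv_fun_pow, fderiv_coord_x, fderiv_coord_y, fderiv_coord_t]
      ring)
  obtain ⟨c8, h8⟩ := eq_add_const_of_XD_YD_eq hv
    (g := fun p => k / 2 * (p.1 ^ 4 + 2 * p.1 ^ 2 * p.2.1 ^ 2 + p.2.1 ^ 4 + p.2.2 ^ 2)
        + c2 * (p.2.2 * p.2.1 - p.1 * p.2.1 ^ 2 - p.1 ^ 3)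
        + c3 * (p.2.2 * p.1 + p.1 ^ 2 * p.2.1 + p.2.1 ^ 3)
        + d / 2 * (p.1 ^ 2 + p.2.1 ^ 2) + c5 * p.1 + c6 * p.2.1 + c7 * p.2.2) (by fun_prop)
    (fun p => by
      rw [← hA, h5]
      simp (disch := fun_prop) [XD, fderiv_fun_add, fderiv_fun_sub, fderiv_const_mul,
        fderiv_fun_mul, fderiv_fun_pow, fderiv_coord_x, fderiv_coord_y, fderiv_coord_t]
      ring)
    (fun p => by
      rw [← hB, h6]
      simp (disch := fun_prop) [YD, fderiv_fun_add, fderiv_fun_sub, fderiv_const_mul,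
        fderiv_fun_mul, fderiv_fun_pow, fderiv_coord_x, fderiv_coord_y, fderiv_coord_t]
      ring)
  exact ⟨k / 2, c2, c3, d / 2, c5, c6, c7, c8, h8⟩

theorem system_of_polynomial (c1 c2 c3 c4 c5 c6 c7 c8 : ℝ) {v : Heis → ℝ}
    (hv : ∀ p : Heis, v p =
      c1 * (p.1 ^ 4 + 2 * p.1 ^ 2 * p.2.1 ^ 2 + p.2.1 ^ 4 + p.2.2 ^ 2)
        + c2 * (p.2.2 * p.2.1 - p.1 * p.2.1 ^ 2 - p.1 ^ 3)
        + c3 * (p.2.2 * p.1 + p.1 ^ 2 * p.2.1 + p.2.1 ^ 3)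
        + c4 * (p.1 ^ 2 + p.2.1 ^ 2) + c5 * p.1 + c6 * p.2.1 + c7 * p.2.2 + c8) (p : Heis) :
    XD (XD v) p = YD (YD v) p ∧ XD (YD v) p = -(YD (XD v) p) := by
  have hX : XD v = fun p => 4 * c1 * (p.1 * (p.1 ^ 2 + p.2.1 ^ 2) + p.2.1 * p.2.2)
      + c2 * (p.2.1 ^ 2 - 3 * p.1 ^ 2) + c3 * (p.2.2 + 4 * (p.1 * p.2.1)) + 2 * c4 * p.1
      + 2 * c7 * p.2.1 + c5 := funext fun p => by
    rw [funext hv]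
    simp (disch := fun_prop) [XD, fderiv_fun_add, fderiv_fun_sub, fderiv_const_mul,
      fderiv_fun_mul, fderiv_fun_pow, fderiv_coord_x, fderiv_coord_y, fderiv_coord_t]
    ring
  have hY : YD v = fun p => 4 * c1 * (p.2.1 * (p.1 ^ 2 + p.2.1 ^ 2) - p.1 * p.2.2)
      + c2 * (p.2.2 - 4 * (p.1 * p.2.1)) + c3 * (3 * p.2.1 ^ 2 - p.1 ^ 2) + 2 * c4 * p.2.1
      - 2 * c7 * p.1 + c6 := funext fun p => by
    rw [funext hv]
    simp (disch := fun_prop) [YD, fderiv_fun_add, fderiv_fun_sub, fderiv_const_mul,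
      fderiv_fun_mul, fderiv_fun_pow, fderiv_coord_x, fderiv_coord_y, fderiv_coord_t]
    ring
  rw [hX, hY]
  constructor <;>
  · simp (disch := fun_prop) [XD, YD, fderiv_fun_add, fderiv_fun_sub, fderiv_const_mul,
      fderiv_fun_mul, fderiv_fun_pow, fderiv_coord_x, fderiv_coord_y, fderiv_coord_t]
    ring

theorem hasFDerivAt_complex {a b : Heis → ℝ} (ha : ContDiff ℝ (⊤ : ℕ∞) a)
    (hb : ContDiff ℝ (⊤ : ℕ∞) b) (p : Heis) :
    HasFDerivAt (fun q => ((a q : ℂ) - I * (b q : ℂ)) / 2)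
      ((2 : ℂ)⁻¹ • (Complex.ofRealCLM.comp (fderiv ℝ a p)
        - I • Complex.ofRealCLM.comp (fderiv ℝ b p))) p := by
  have h1 := Complex.ofRealCLM.hasFDerivAt.comp p (differentiable_of_smooth ha p).hasFDerivAt
  have h2 := Complex.ofRealCLM.hasFDerivAt.comp p (differentiable_of_smooth hb p).hasFDerivAt
  refine ((h1.sub (h2.const_mul I)).const_mul (2 : ℂ)⁻¹).congr_of_eventuallyEq (.of_forall ?_)
  intro q
  simp [div_eq_inv_mul]

theorem ZD_complex {a b : Heis → ℝ} (ha : ContDiff ℝ (⊤ : ℕ∞) a)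
    (hb : ContDiff ℝ (⊤ : ℕ∞) b) (p : Heis) :
    ZD (fun q => ((a q : ℂ) - I * (b q : ℂ)) / 2) p
      = (((XD a p - YD b p : ℝ) : ℂ) - I * ((XD b p + YD a p : ℝ) : ℂ)) / 4 := by
  simp only [ZD, XD, YD, (hasFDerivAt_complex ha hb p).fderiv]
  simp
  linear_combination (fderiv ℝ b p (0, 1, -(2 * p.1)) : ℂ) / 4 * I_mul_I

theorem ZD_Cplx {v : Heis → ℝ} (hv : ContDiff ℝ (⊤ : ℕ∞) v) :
    ZD (Cplx v) = fun q => (((XD v q : ℝ) : ℂ) - I * ((YD v q : ℝ) : ℂ)) / 2 := by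
  funext p
  have h := Complex.ofRealCLM.hasFDerivAt.comp p (differentiable_of_smooth hv p).hasFDerivAt
  have h' : fderiv ℝ (Cplx v) p = _ := h.fderiv
  simp [ZD, XD, YD, h']

theorem system_iff_ZD_ZD_eq_zero {v : Heis → ℝ} (hv : ContDiff ℝ (⊤ : ℕ∞) v) (p : Heis) :
    (XD (XD v) p = YD (YD v) p ∧ XD (YD v) p = -(YD (XD v) p)) ↔ ZD (ZD (Cplx v)) p = 0 := by
  rw [ZD_Cplx hv, ZD_complex (contDiff_XD hv) (contDiff_YD hv), Complex.ext_iff]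
  simp only [sub_re, sub_im, mul_re, mul_im, I_re, I_im, ofReal_re, ofReal_im, div_ofNat_re,
    div_ofNat_im, zero_re, zero_im]
  constructor <;> rintro ⟨h1, h2⟩ <;> constructor <;> linarith

/-- characterization of contact conformal vector fields: for smooth v₀,
(i) X²v₀ = Y²v₀ and XYv₀ = −YXv₀ is equivalent to (ii) Z²v₀ = 0, which is equivalent to
(iii) v₀ being the explicit 8-parameter polynomial. -/
theorem stmt_1 (v0 : Heis → ℝ) (hv0 : ContDiff ℝ (⊤ : ℕ∞) v0) :
    ((∀ p : Heis, XD (XD v0) p = YD (YD v0) p ∧ XD (YD v0) p = -(YD (XD v0) p))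
        ↔ (∀ p : Heis, ZD (ZD (Cplx v0)) p = 0)) ∧
    ((∀ p : Heis, ZD (ZD (Cplx v0)) p = 0)
        ↔ ∃ c1 c2 c3 c4 c5 c6 c7 c8 : ℝ, ∀ x y t : ℝ,
            v0 (x, y, t) =
              c1 * (x ^ 4 + 2 * x ^ 2 * y ^ 2 + y ^ 4 + t ^ 2)
              + c2 * (t * y - x * y ^ 2 - x ^ 3)
              + c3 * (t * x + x ^ 2 * y + y ^ 3)
              + c4 * (x ^ 2 + y ^ 2) + c5 * x + c6 * y + c7 * t + c8) := by
  have hi : (∀ p : Heis, XD (XD v0) p = YD (YD v0) p ∧ XD (YD v0) p = -(YD (XD v0) p))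
      ↔ (∀ p : Heis, ZD (ZD (Cplx v0)) p = 0) :=
    forall_congr' (system_iff_ZD_ZD_eq_zero hv0)
  refine ⟨hi, hi.symm.trans ⟨fun h => ?_, ?_⟩⟩
  · obtain ⟨c1, c2, c3, c4, c5, c6, c7, c8, hc⟩ :=
      exists_polynomial_of_system hv0 (fun p => (h p).1) (fun p => (h p).2)
    exact ⟨c1, c2, c3, c4, c5, c6, c7, c8, fun x y t => hc (x, y, t)⟩
  · rintro ⟨c1, c2, c3, c4, c5, c6, c7, c8, hc⟩
    exact system_of_polynomial c1 c2 c3 c4 c5 c6 c7 c8 fun p => hc p.1 p.2.1 p.2.2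
end
end

section
/- Let Ω ⊆ ℝ³ be open and let f = (f₁,f₂,f₃) : Ω → ℝ³ be a smooth map satisfying the contact equations with J_F ≠ 0 on Ω, and suppose that on Ω one has Z²(J_F⁻¹) = 0, Z²(J_F⁻¹·F) = 0, Z²(J_F⁻¹·F̄) = 0, and Z²(J_F⁻¹·(f₁² + f₂²)) = 0, where F = f₁ + i f₂. Then ZF · Z(F̄) = 0 on Ω. If moreover J_F > 0 on Ω, then Z̄F = 0 on Ω, i.e. f is conformal. -/
noncomputable section

open Complex

theorem ContDiffOn.fderiv_apply_self {E : Type*} [NormedAddCommGroup E] [NormedSpace ℝ E]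
    {Ω : Set Heis} (hΩ : IsOpen Ω) {u : Heis → E} (hu : ContDiffOn ℝ (⊤ : ℕ∞) u Ω)
    {v : Heis → Heis} (hv : ContDiff ℝ (⊤ : ℕ∞) v) :
    ContDiffOn ℝ (⊤ : ℕ∞) (fun p => fderiv ℝ u p (v p)) Ω :=
  (hu.fderiv_of_isOpen hΩ (by simp)).clm_apply hv.contDiffOn

theorem ContDiffOn.XD {E : Type*} [NormedAddCommGroup E] [NormedSpace ℝ E]
    {Ω : Set Heis} (hΩ : IsOpen Ω) {u : Heis → E} (hu : ContDiffOn ℝ (⊤ : ℕ∞) u Ω) :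
    ContDiffOn ℝ (⊤ : ℕ∞) (XD u) Ω :=
  hu.fderiv_apply_self hΩ (v := fun p => (1, 0, 2 * p.2.1)) (by fun_prop)

theorem ContDiffOn.YD {E : Type*} [NormedAddCommGroup E] [NormedSpace ℝ E]
    {Ω : Set Heis} (hΩ : IsOpen Ω) {u : Heis → E} (hu : ContDiffOn ℝ (⊤ : ℕ∞) u Ω) :
    ContDiffOn ℝ (⊤ : ℕ∞) (YD u) Ω :=
  hu.fderiv_apply_self hΩ (v := fun p => (0, 1, -(2 * p.1))) (by fun_prop)

theorem ContDiffOn.ZD {Ω : Set Heis} (hΩ : IsOpen Ω) {u : Heis → ℂ}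
    (hu : ContDiffOn ℝ (⊤ : ℕ∞) u Ω) : ContDiffOn ℝ (⊤ : ℕ∞) (ZD u) Ω :=
  ((hu.XD hΩ).sub (contDiffOn_const.mul (hu.YD hΩ))).div_const 2

theorem ContDiffOn.differentiableAt_of_mem {E : Type*} [NormedAddCommGroup E] [NormedSpace ℝ E]
    {Ω : Set Heis} (hΩ : IsOpen Ω) {u : Heis → E} (hu : ContDiffOn ℝ (⊤ : ℕ∞) u Ω)
    {p : Heis} (hp : p ∈ Ω) : DifferentiableAt ℝ u p :=
  (hu.contDiffAt (hΩ.mem_nhds hp)).differentiableAt (by simp)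

theorem ContDiffOn.JF {Ω : Set Heis} (hΩ : IsOpen Ω) {f1 f2 : Heis → ℝ}
    (hf1 : ContDiffOn ℝ (⊤ : ℕ∞) f1 Ω) (hf2 : ContDiffOn ℝ (⊤ : ℕ∞) f2 Ω) :
    ContDiffOn ℝ (⊤ : ℕ∞) (JF f1 f2) Ω :=
  ((hf1.XD hΩ).mul (hf2.YD hΩ)).sub ((hf1.YD hΩ).mul (hf2.XD hΩ))

theorem ContDiffOn.CF {Ω : Set Heis} {f1 f2 : Heis → ℝ}
    (hf1 : ContDiffOn ℝ (⊤ : ℕ∞) f1 Ω) (hf2 : ContDiffOn ℝ (⊤ : ℕ∞) f2 Ω) :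
    ContDiffOn ℝ (⊤ : ℕ∞) (CF f1 f2) Ω :=
  (ofRealCLM.contDiff.comp_contDiffOn hf1).add
    ((ofRealCLM.contDiff.comp_contDiffOn hf2).mul contDiffOn_const)

theorem ZD_mul {u v : Heis → ℂ} {p : Heis} (hu : DifferentiableAt ℝ u p)
    (hv : DifferentiableAt ℝ v p) :
    ZD (fun q => u q * v q) p = ZD u p * v p + u p * ZD v p := by
  simp only [ZD, XD, YD, fderiv_fun_mul hu hv, add_apply,
    smul_apply, smul_eq_mul]
  ring

theorem ZD_add {u v : Heis → ℂ} {p : Heis} (hu : DifferentiableAt ℝ u p)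
    (hv : DifferentiableAt ℝ v p) :
    ZD (fun q => u q + v q) p = ZD u p + ZD v p := by
  simp only [ZD, XD, YD, fderiv_fun_add hu hv, add_apply]
  ring

theorem ZD_congr {u v : Heis → ℂ} {Ω : Set Heis} (hΩ : IsOpen Ω) (h : Set.EqOn u v Ω)
    {p : Heis} (hp : p ∈ Ω) : ZD u p = ZD v p := by
  simp only [ZD, XD, YD, (h.eventuallyEq_of_mem (hΩ.mem_nhds hp)).fderiv_eq]

/-- The second-order Leibniz rule for `Z`. -/
theorem ZD_ZD_mul {u v : Heis → ℂ} {Ω : Set Heis} (hΩ : IsOpen Ω)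
    (hu : ContDiffOn ℝ (⊤ : ℕ∞) u Ω) (hv : ContDiffOn ℝ (⊤ : ℕ∞) v Ω) {p : Heis} (hp : p ∈ Ω) :
    ZD (ZD (fun q => u q * v q)) p =
      ZD (ZD u) p * v p + 2 * ZD u p * ZD v p + u p * ZD (ZD v) p := by
  have hu0 := hu.differentiableAt_of_mem hΩ hp
  have hv0 := hv.differentiableAt_of_mem hΩ hp
  have hu1 := (hu.ZD hΩ).differentiableAt_of_mem hΩ hp
  have hv1 := (hv.ZD hΩ).differentiableAt_of_mem hΩ hp
  rw [ZD_congr (v := fun q => ZD u q * v q + u q * ZD v q) hΩ (fun q hq =>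
      ZD_mul (hu.differentiableAt_of_mem hΩ hq) (hv.differentiableAt_of_mem hΩ hq)) hp,
    ZD_add (hu1.fun_mul hv0) (hu0.fun_mul hv1), ZD_mul hu1 hv0, ZD_mul hu0 hv1]
  ring

theorem ZD_conj (u : Heis → ℂ) (p : Heis) :
    ZD (fun q => (starRingEnd ℂ) (u q)) p = (starRingEnd ℂ) (ZbD u p) := by
  have h : fderiv ℝ (fun q => (starRingEnd ℂ) (u q)) p =
      (conjCLE : ℂ →L[ℝ] ℂ).comp (fderiv ℝ u p) := conjCLE.comp_fderiv
  simp [ZD, ZbD, XD, YD, h, sub_eq_add_neg, conj_ofNat]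

/-- `J_F = |ZF|² − |Z̄F|²`. -/
theorem JF_eq_normSq_sub {f1 f2 : Heis → ℝ} {p : Heis} (hf1 : DifferentiableAt ℝ f1 p)
    (hf2 : DifferentiableAt ℝ f2 p) :
    JF f1 f2 p = normSq (ZD (CF f1 f2) p) - normSq (ZbD (CF f1 f2) p) := by
  have h : HasFDerivAt (CF f1 f2) (ofRealCLM.comp (fderiv ℝ f1 p) +
      I • ofRealCLM.comp (fderiv ℝ f2 p)) p := by
    refine ((ofRealCLM.hasFDerivAt.comp p hf1.hasFDerivAt).add
      ((ofRealCLM.hasFDerivAt.comp p hf2.hasFDerivAt).const_mul I)).congr_of_eventuallyEq ?_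
    exact .of_forall fun q => by simp [CF, mul_comm]
  simp only [JF, ZD, ZbD, XD, YD, h.fderiv, normSq_apply]
  simp
  ring

/-- if a smooth contact map with J_F ≠ 0 satisfies Z²(J_F⁻¹) = 0,
Z²(J_F⁻¹F) = 0, Z²(J_F⁻¹F̄) = 0 and Z²(J_F⁻¹(f₁²+f₂²)) = 0 on Ω, then ZF·Z(F̄) = 0 on Ω;
if moreover J_F > 0 on Ω then Z̄F = 0, i.e. f is conformal. -/
theorem stmt_2 (Ω : Set Heis) (hΩ : IsOpen Ω) (f1 f2 f3 : Heis → ℝ)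
    (hf1 : ContDiffOn ℝ (⊤ : ℕ∞) f1 Ω) (hf2 : ContDiffOn ℝ (⊤ : ℕ∞) f2 Ω)
    (hf3 : ContDiffOn ℝ (⊤ : ℕ∞) f3 Ω)
    (hcont : ContactOn f1 f2 f3 Ω) (hJ : ∀ p ∈ Ω, JF f1 f2 p ≠ 0)
    (h8 : ∀ p ∈ Ω, ZD (ZD (fun q => (((JF f1 f2 q)⁻¹ : ℝ) : ℂ))) p = 0)
    (h5 : ∀ p ∈ Ω, ZD (ZD (fun q => (((JF f1 f2 q)⁻¹ : ℝ) : ℂ) * CF f1 f2 q)) p = 0)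
    (h6 : ∀ p ∈ Ω,
      ZD (ZD (fun q => (((JF f1 f2 q)⁻¹ : ℝ) : ℂ) * (starRingEnd ℂ) (CF f1 f2 q))) p = 0)
    (h4 : ∀ p ∈ Ω,
      ZD (ZD (fun q => (((JF f1 f2 q)⁻¹ * (f1 q ^ 2 + f2 q ^ 2) : ℝ) : ℂ))) p = 0) :
    (∀ p ∈ Ω, ZD (CF f1 f2) p * ZD (fun q => (starRingEnd ℂ) (CF f1 f2 q)) p = 0) ∧
    ((∀ p ∈ Ω, 0 < JF f1 f2 p) → ∀ p ∈ Ω, ZbD (CF f1 f2) p = 0) := by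
  have hu : ContDiffOn ℝ (⊤ : ℕ∞) (fun q => (((JF f1 f2 q)⁻¹ : ℝ) : ℂ)) Ω :=
    ofRealCLM.contDiff.comp_contDiffOn ((hf1.JF hΩ hf2).inv hJ)
  have hF : ContDiffOn ℝ (⊤ : ℕ∞) (CF f1 f2) Ω := hf1.CF hf2
  have hG : ContDiffOn ℝ (⊤ : ℕ∞) (fun q => (starRingEnd ℂ) (CF f1 f2 q)) Ω :=
    conjCLE.contDiff.comp_contDiffOn hF
  have hprod : ∀ p ∈ Ω,
      ZD (CF f1 f2) p * ZD (fun q => (starRingEnd ℂ) (CF f1 f2 q)) p = 0 := by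
    intro p hp
    have e8 := h8 p hp
    have e5 := h5 p hp
    have e6 := h6 p hp
    have e4 := h4 p hp
    have hfun : (fun q => (((JF f1 f2 q)⁻¹ * (f1 q ^ 2 + f2 q ^ 2) : ℝ) : ℂ)) = fun q =>
        (((JF f1 f2 q)⁻¹ : ℝ) : ℂ) * (CF f1 f2 q * (starRingEnd ℂ) (CF f1 f2 q)) := by
      funext q
      simp only [mul_conj, CF, normSq_add_mul_I, ofReal_mul]
    rw [hfun, ZD_ZD_mul hΩ hu (hF.mul hG) hp, ZD_ZD_mul hΩ hF hG hp,
      ZD_mul (hF.differentiableAt_of_mem hΩ hp) (hG.differentiableAt_of_mem hΩ hp), e8] at e4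
    rw [ZD_ZD_mul hΩ hu hF hp, e8] at e5
    rw [ZD_ZD_mul hΩ hu hG hp, e8] at e6
    have hu0 : (((JF f1 f2 p)⁻¹ : ℝ) : ℂ) ≠ 0 := ofReal_ne_zero.2 (inv_ne_zero (hJ p hp))
    refine (mul_eq_zero.1 ?_).resolve_left (mul_ne_zero two_ne_zero hu0)
    linear_combination e4 - (starRingEnd ℂ) (CF f1 f2 p) * e5 - CF f1 f2 p * e6
  refine ⟨hprod, fun hpos p hp => ?_⟩
  have hne : ZD (CF f1 f2) p ≠ 0 := by
    intro h0
    have h := hpos p hp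
    rw [JF_eq_normSq_sub (hf1.differentiableAt_of_mem hΩ hp)
      (hf2.differentiableAt_of_mem hΩ hp), h0, map_zero] at h
    linarith [normSq_nonneg (ZbD (CF f1 f2) p)]
  simpa [ZD_conj, hne] using hprod p hp
end
end
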